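/- The nonzero vectors c = (c^0, c^1, c^2) ∈ ℂ^3 satisfying −c^i = c^i (c^{i+1} − c^{i+2}) for all i = 0,1,2 (indices mod 3) are exactly the three vectors (−1, 0, 1), (1, −1, 0) and (0, 1, −1). -/

import Mathlib

/-!
Each equation says that `cⁱ = 0` or `c^{i+1} − c^{i+2} = −1`. The three linear equations cannot all
hold, since their left-hand sides sum to `0` and their right-hand sides to `−3`; so some component
vanishes. If `cⁱ` is the only zero component, the other two linear equations force `c^{i+1} = 1`
and `c^{i+2} = −1`. If exactly two components vanish, the remaining linear equation reads `0 = −1`.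
-/

/-- A residue equation splits into a vanishing component or a linear equation. -/
lemma residue_eq_split {x y z : ℂ} (h : -x = x * (y - z)) : x = 0 ∨ y - z = -1 := by
  have h' : x * (y - z + 1) = 0 := by linear_combination -h
  exact (mul_eq_zero.mp h').imp_right eq_neg_of_add_eq_zero_left

/-- The nonzero vectors `c = (c⁰, c¹, c²) ∈ ℂ³` satisfying
`−cⁱ = cⁱ (c^{i+1} − c^{i+2})` for all `i` (indices mod 3) are exactly
`(−1, 0, 1)`, `(1, −1, 0)` and `(0, 1, −1)`. -/
theorem residueVectors_A2 (c : Fin 3 → ℂ) :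
    (c ≠ 0 ∧ ∀ i : Fin 3, -c i = c i * (c (i + 1) - c (i + 2))) ↔
      c = ![-1, 0, 1] ∨ c = ![1, -1, 0] ∨ c = ![0, 1, -1] := by
  constructor
  · rintro ⟨hne, h⟩
    have h0 : -c 0 = c 0 * (c 1 - c 2) := h 0
    have h1 : -c 1 = c 1 * (c 2 - c 0) := h 1
    have h2 : -c 2 = c 2 * (c 0 - c 1) := h 2
    have hne' : ¬(c 0 = 0 ∧ c 1 = 0 ∧ c 2 = 0) := by
      rintro ⟨a, b, d⟩
      apply hne
      funext i
      fin_cases i <;> assumption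
    have ext3 : ∀ x y z : ℂ, c = ![x, y, z] ↔ c 0 = x ∧ c 1 = y ∧ c 2 = z := by
      intro x y z
      simp [funext_iff, Fin.forall_fin_succ]
    simp only [ext3]
    have s0 := residue_eq_split h0
    have s1 := residue_eq_split h1
    have s2 := residue_eq_split h2
    clear h h0 h1 h2 hne ext3
    grind
  · rintro (rfl | rfl | rfl) <;>
      refine ⟨fun h => ?_, fun i => by fin_cases i <;> simp⟩
    · simpa using congrFun h 0
    · simpa using congrFun h 0
    · simpa using congrFun h 1
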